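/- Let t > 0, λ > 0, η₁ > 1, η₂ > 0, p, q > 0 with p + q = 1, and let U be a probability density on (0,∞) such that U(x) = B₁·x^{−A₃}·exp{A₂·√(log x)}·(log x)^{κ}·(1 + O((log x)^{−1/2})) as x → ∞ and U(x) = B̃₁·x^{Ã₃}·exp{Ã₂·√(log(1/x))}·(log(1/x))^{κ}·(1 + O((log(1/x))^{−1/2})) as x → 0, where B₁, B̃₁ > 0, A₂, Ã₂ ∈ ℝ, κ ∈ ℝ, Ã₃ > −1, and A₃ > 1 + η₁. Define D(x) = e^{−λt}·U(x) + (U ⋆_M H(t,·))(x) for x > 0. Then D(x) = (1/(2√π))·m_{η₁}(U)·(η₁λtp)^{1/4}·exp{η₂λtq/(η₁+η₂) − λt}·(log x)^{−3/4}·exp{2√(η₁λtp)·√(log x)}·x^{−η₁−1}·(1 + O((log x)^{−1/2})) as x → ∞, where m_{η₁}(U) = ∫_0^∞ x^{η₁} U(x) dx < ∞. -/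

import Mathlib

open Filter Asymptotics MeasureTheory

/-- `P_{n,k}` from Kou's double exponential jump model: `P_{n,n} = p^n` and, for
`1 ≤ k ≤ n−1`,
`P_{n,k} = Σ_{i=k}^{n−1} C(n−k−1, i−k) C(n,i) (η₁/(η₁+η₂))^{i−k} (η₂/(η₁+η₂))^{n−i} p^i q^{n−i}`. -/
noncomputable def Pcoef (η₁ η₂ p q : ℝ) (n k : ℕ) : ℝ :=
  if k = n then p ^ n
  else ∑ i ∈ Finset.Ico k n,
    ((n - k - 1).choose (i - k) : ℝ) * (n.choose i : ℝ) *
      (η₁ / (η₁ + η₂)) ^ (i - k) * (η₂ / (η₁ + η₂)) ^ (n - i) * p ^ i * q ^ (n - i)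

/-- `Q_{n,k}` from Kou's double exponential jump model: `Q_{n,n} = q^n` and, for
`1 ≤ k ≤ n−1`,
`Q_{n,k} = Σ_{i=k}^{n−1} C(n−k−1, i−k) C(n,i) (η₁/(η₁+η₂))^{n−i} (η₂/(η₁+η₂))^{i−k} p^{n−i} q^i`. -/
noncomputable def Qcoef (η₁ η₂ p q : ℝ) (n k : ℕ) : ℝ :=
  if k = n then q ^ n
  else ∑ i ∈ Finset.Ico k n,
    ((n - k - 1).choose (i - k) : ℝ) * (n.choose i : ℝ) *
      (η₁ / (η₁ + η₂)) ^ (n - i) * (η₂ / (η₁ + η₂)) ^ (i - k) * p ^ (n - i) * q ^ i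

/-- The Poisson weights `π_n = e^{−λt} (λt)^n / n!`. -/
noncomputable def poisCoef (lam t : ℝ) (n : ℕ) : ℝ :=
  Real.exp (-(lam * t)) * (lam * t) ^ n / (n.factorial : ℝ)

/-- `a_k = (η₁^{k+1}/k!) Σ_{n=k+1}^∞ π_n P_{n,k+1}` (the series is reindexed by
`n = m + (k+1)`, `m ≥ 0`). -/
noncomputable def aCoef (lam t η₁ η₂ p q : ℝ) (k : ℕ) : ℝ :=
  η₁ ^ (k + 1) / (k.factorial : ℝ) *
    ∑' m : ℕ, poisCoef lam t (m + (k + 1)) * Pcoef η₁ η₂ p q (m + (k + 1)) (k + 1)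

/-- `b_k = (η₂^{k+1}/k!) Σ_{n=k+1}^∞ π_n Q_{n,k+1}` (the series is reindexed by
`n = m + (k+1)`, `m ≥ 0`). -/
noncomputable def bCoef (lam t η₁ η₂ p q : ℝ) (k : ℕ) : ℝ :=
  η₂ ^ (k + 1) / (k.factorial : ℝ) *
    ∑' m : ℕ, poisCoef lam t (m + (k + 1)) * Qcoef η₁ η₂ p q (m + (k + 1)) (k + 1)

/-- `G₁(t,u) = Σ_{k=0}^∞ a_k u^k`. -/
noncomputable def G1 (lam t η₁ η₂ p q : ℝ) (u : ℝ) : ℝ :=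
  ∑' k : ℕ, aCoef lam t η₁ η₂ p q k * u ^ k

/-- `G₂(t,−u) = Σ_{k=0}^∞ b_k u^k`; `G2m lam t η₁ η₂ p q u` stands for `G₂(t,−u)`. -/
noncomputable def G2m (lam t η₁ η₂ p q : ℝ) (u : ℝ) : ℝ :=
  ∑' k : ℕ, bCoef lam t η₁ η₂ p q k * u ^ k

/-- `H₁(t,x) = G₁(t, log x)` for `x > 1`. -/
noncomputable def H1fun (lam t η₁ η₂ p q : ℝ) (x : ℝ) : ℝ :=
  G1 lam t η₁ η₂ p q (Real.log x)

/-- `H₂(t,x) = G₂(t, log x) = G2m(t, log(1/x))` for `0 < x < 1`. -/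
noncomputable def H2fun (lam t η₁ η₂ p q : ℝ) (x : ℝ) : ℝ :=
  G2m lam t η₁ η₂ p q (Real.log x⁻¹)

/-- The density of the absolutely continuous part of the law of the exponential compound
Poisson factor: `H(t,x) = H₁(t,x) x^{−η₁−1}` for `x > 1` and `H(t,x) = H₂(t,x) x^{η₂−1}`
for `0 < x < 1`. -/
noncomputable def Hfun (lam t η₁ η₂ p q : ℝ) (x : ℝ) : ℝ :=
  if 1 < x then H1fun lam t η₁ η₂ p q x * x ^ (-η₁ - 1)
  else H2fun lam t η₁ η₂ p q x * x ^ (η₂ - 1)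

/-- The Mellin convolution of two measurable functions on `(0,∞)`:
`f ⋆_M g (x) = ∫_0^∞ f(x/t) g(t) dt/t`. -/
noncomputable def mellinConv (f g : ℝ → ℝ) (x : ℝ) : ℝ :=
  ∫ t in Set.Ioi (0:ℝ), f (x / t) * g t / t

/-!
Sorting the terms of `a_k` by the number `i` of additional upward jumps, the `i = 0` part is an
exponential series and the parts with `i ≥ 1` gain a factor `1 / (k + 2)`. Hence `G₁(t, u)` is a
multiple of `∑ (cu)^k / (k! (k+1)!)`, `c = η₁λtp`, up to an error bounded by a multiple of
`∑ (cu)^k / (k! (k+2)!)`. These are modified Bessel series, and Laplace's method applied to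
Poisson's integral gives `G₁(t, u) ~ const · u^{-3/4} e^{2√(cu)}` with relative error `O(u^{-1/2})`.

In logarithmic coordinates the Mellin convolution becomes
`x^{-η₁-1} ∫ y^{η₁} U(y) Ψ(log x - log y) dy`, where `Ψ = G₁` on the positive half-line. Replacing
`log x - log y` by `log x` in `u^{-3/4} e^{2√(cu)}` costs a relative error
`O((log x)^{-1/2} e^{ε|log y|})`, which for small `ε ≤ η₁` is integrable against `y^{η₁} U(y)`
because `U` decays faster than `x^{-η₁-1-ε}`. The same decay makes the jump-free part
`e^{-λt} U(x)` negligible.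
-/

/-! ### Kou's coefficients -/

lemma summable_and_abs_tsum_sub_le {ι : Type*} {f g h : ι → ℝ} {a b : ℝ}
    (hf : HasSum f a) (hg : HasSum g b) (hfg : ∀ i, |h i - f i| ≤ g i) :
    Summable h ∧ |∑' i, h i - a| ≤ b := by
  have hdiff : Summable fun i => h i - f i := .of_norm_bounded hg.summable hfg
  have hh : Summable h := by simpa using hdiff.add hf.summable
  exact ⟨hh, (hh.hasSum.sub hf).norm_le_of_bounded hg hfg⟩

lemma hasSum_pow_div_factorial (x : ℝ) :
    HasSum (fun n : ℕ => x ^ n / (n.factorial : ℝ)) (Real.exp x) := by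
  rw [Real.exp_eq_exp_ℝ]
  exact NormedSpace.expSeries_div_hasSum_exp x

lemma sum_antidiagonal_pow_div_factorial_mul (x y : ℝ) (m : ℕ) :
    ∑ ij ∈ Finset.HasAntidiagonal.antidiagonal m,
        x ^ ij.1 / (ij.1.factorial : ℝ) * (y ^ ij.2 / (ij.2.factorial : ℝ)) =
      (x + y) ^ m / (m.factorial : ℝ) := by
  rw [(Commute.all x y).add_pow', Finset.sum_div]
  refine Finset.sum_congr rfl fun ij hij => ?_
  obtain rfl := Finset.HasAntidiagonal.mem_antidiagonal.mp hij
  rw [nsmul_eq_mul, Nat.cast_add_choose]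
  field_simp

lemma succ_factorial_mul_factorial_le (k : ℕ) {j : ℕ} (hj : 1 ≤ j) :
    (k + 1).factorial * j.factorial ≤ (k + j).factorial := by
  induction j, hj using Nat.le_induction with
  | base => simp
  | succ j _ ih =>
    calc (k + 1).factorial * (j + 1).factorial
        = (j + 1) * ((k + 1).factorial * j.factorial) := by rw [Nat.factorial_succ j]; ring
      _ ≤ (k + j + 1) * (k + j).factorial := by gcongr; omega
      _ = (k + (j + 1)).factorial := by rw [← add_assoc, Nat.factorial_succ (k + j)]

/-- The contribution to `π_n P_{n,k}`, up to the factor `e^{-λt}`, of `k + i` upward and `j`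
downward jumps, where `n = k + i + j`, `A = η₁/(η₁+η₂)`, `B = η₂/(η₁+η₂)`, `x = λtp` and `y = λtq`.
Truncated subtraction makes the binomial coefficient equal to `1` when `i = j = 0`, in agreement
with the convention `P_{n,n} = p^n`. -/
noncomputable def jumpTerm (A B x y : ℝ) (k i j : ℕ) : ℝ :=
  ((i + j - 1).choose i : ℝ) * A ^ i * B ^ j * (x ^ (k + i) / ((k + i).factorial : ℝ)) *
    (y ^ j / (j.factorial : ℝ))

lemma jumpTerm_zero_left (A B x y : ℝ) (k j : ℕ) :
    jumpTerm A B x y k 0 j =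
      x ^ k / (k.factorial : ℝ) * ((B * y) ^ j / (j.factorial : ℝ)) := by
  simp only [jumpTerm, zero_add, Nat.choose_zero_right, Nat.cast_one, pow_zero, one_mul, add_zero,
    mul_pow]
  ring

lemma poisCoef_mul_Pcoef (lam t η₁ η₂ p q : ℝ) (m k : ℕ) :
    poisCoef lam t (m + k) * Pcoef η₁ η₂ p q (m + k) k =
      Real.exp (-(lam * t)) * ∑ ij ∈ Finset.HasAntidiagonal.antidiagonal m,
        jumpTerm (η₁ / (η₁ + η₂)) (η₂ / (η₁ + η₂)) (lam * t * p) (lam * t * q) k ij.1 ij.2 := by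
  unfold poisCoef Pcoef
  rcases m.eq_zero_or_pos with rfl | hm
  · simp only [zero_add, if_true, Finset.Nat.antidiagonal_zero, Finset.sum_singleton,
      jumpTerm_zero_left, pow_zero, Nat.factorial_zero, Nat.cast_one, mul_pow]
    ring
  · rw [if_neg (by omega), Finset.sum_Ico_eq_sum_range, Nat.add_sub_cancel,
      Finset.Nat.sum_antidiagonal_eq_sum_range_succ
        (jumpTerm (η₁ / (η₁ + η₂)) (η₂ / (η₁ + η₂)) (lam * t * p) (lam * t * q) k),
      Finset.sum_range_succ]
    have hlast : jumpTerm (η₁ / (η₁ + η₂)) (η₂ / (η₁ + η₂)) (lam * t * p) (lam * t * q) k m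
        (m - m) = 0 := by
      rw [jumpTerm, Nat.choose_eq_zero_of_lt (by omega)]
      simp only [Nat.cast_zero, zero_mul]
    rw [hlast, add_zero, mul_div_assoc, mul_assoc, Finset.mul_sum]
    congr 1
    refine Finset.sum_congr rfl fun i hi => ?_
    obtain ⟨j, rfl⟩ := Nat.exists_eq_add_of_le (Finset.mem_range.mp hi).le
    rw [jumpTerm, show i + j - i = j by omega, show k + i - k = i by omega,
      show i + j + k - (k + i) = j by omega, show i + j + k = k + i + j by ring,
      Nat.cast_add_choose, mul_pow _ p, mul_pow _ q, pow_add _ (k + i) j]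
    field_simp

section
variable {A B x y : ℝ}

lemma jumpTerm_nonneg (hA : 0 ≤ A) (hB : 0 ≤ B) (hx : 0 ≤ x) (hy : 0 ≤ y) (k i j : ℕ) :
    0 ≤ jumpTerm A B x y k i j := by unfold jumpTerm; positivity

lemma jumpTerm_le (hA : 0 ≤ A) (hA1 : A ≤ 1) (hB : 0 ≤ B) (hB1 : B ≤ 1)
    (hx : 0 ≤ x) (hy : 0 ≤ y) (k : ℕ) {i : ℕ} (hi : 1 ≤ i) (j : ℕ) :
    jumpTerm A B x y k i j ≤ x ^ k / ((k + 1).factorial : ℝ) *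
      ((2 * x) ^ i / (i.factorial : ℝ) * ((2 * y) ^ j / (j.factorial : ℝ))) := by
  have hchoose : ((i + j - 1).choose i : ℝ) ≤ 2 ^ (i + j) := by
    exact_mod_cast (Nat.choose_le_two_pow _ _).trans (Nat.pow_le_pow_right two_pos (by omega))
  have hAi : A ^ i ≤ 1 := pow_le_one₀ hA hA1
  have hBj : B ^ j ≤ 1 := pow_le_one₀ hB hB1
  have hfac : ((k + 1).factorial * i.factorial : ℝ) ≤ (k + i).factorial := by
    exact_mod_cast succ_factorial_mul_factorial_le k hi
  calc jumpTerm A B x y k i j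
      ≤ 2 ^ (i + j) * 1 * 1 * (x ^ (k + i) / ((k + 1).factorial * i.factorial : ℝ)) *
        (y ^ j / (j.factorial : ℝ)) := by unfold jumpTerm; gcongr
    _ = _ := by rw [pow_add x, pow_add 2, mul_pow, mul_pow]; field_simp

lemma abs_sum_jumpTerm_sub_le (hA : 0 ≤ A) (hA1 : A ≤ 1) (hB : 0 ≤ B) (hB1 : B ≤ 1)
    (hx : 0 ≤ x) (hy : 0 ≤ y) (k m : ℕ) :
    |∑ ij ∈ Finset.HasAntidiagonal.antidiagonal m, jumpTerm A B x y k ij.1 ij.2 -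
        x ^ k / (k.factorial : ℝ) * ((B * y) ^ m / (m.factorial : ℝ))| ≤
      x ^ k / ((k + 1).factorial : ℝ) * ((2 * x + 2 * y) ^ m / (m.factorial : ℝ)) := by
  have hmem : (0, m) ∈ Finset.HasAntidiagonal.antidiagonal m := by simp
  rw [← jumpTerm_zero_left A, ← Finset.sum_erase_eq_sub (f := fun ij : ℕ × ℕ =>
      jumpTerm A B x y k ij.1 ij.2) hmem,
    abs_of_nonneg (Finset.sum_nonneg fun ij _ => jumpTerm_nonneg hA hB hx hy k ij.1 ij.2),
    ← sum_antidiagonal_pow_div_factorial_mul, Finset.mul_sum]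
  refine (Finset.sum_le_sum fun ij hij => jumpTerm_le hA hA1 hB hB1 hx hy k ?_ ij.2).trans
    (Finset.sum_le_sum_of_subset_of_nonneg (Finset.erase_subset _ _) fun _ _ _ => by positivity)
  obtain ⟨hne, hsum⟩ := Finset.mem_erase.mp hij
  refine Nat.one_le_iff_ne_zero.mpr fun hi => hne (Prod.ext hi ?_)
  simpa [hi] using Finset.HasAntidiagonal.mem_antidiagonal.mp hsum

end

section
variable {lam t η₁ η₂ p q : ℝ}

lemma abs_tsum_poisCoef_mul_Pcoef_sub_le (hL : 0 ≤ lam * t) (hη₁ : 0 ≤ η₁) (hη₂ : 0 ≤ η₂)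
    (hp : 0 ≤ p) (hq : 0 ≤ q) (k : ℕ) :
    |∑' m : ℕ, poisCoef lam t (m + k) * Pcoef η₁ η₂ p q (m + k) k -
        Real.exp (-(lam * t)) * ((lam * t * p) ^ k / (k.factorial : ℝ) *
          Real.exp (η₂ / (η₁ + η₂) * (lam * t * q)))| ≤
      Real.exp (-(lam * t)) * ((lam * t * p) ^ k / ((k + 1).factorial : ℝ) *
        Real.exp (2 * (lam * t * p) + 2 * (lam * t * q))) := by
  simp_rw [poisCoef_mul_Pcoef]
  rw [tsum_mul_left, ← mul_sub, abs_mul, Real.abs_exp]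
  gcongr
  exact (summable_and_abs_tsum_sub_le ((hasSum_pow_div_factorial _).mul_left _)
    ((hasSum_pow_div_factorial _).mul_left _) fun m =>
      abs_sum_jumpTerm_sub_le (by positivity)
        (div_le_one_of_le₀ (le_add_of_nonneg_right hη₂) (by positivity)) (by positivity)
        (div_le_one_of_le₀ (le_add_of_nonneg_left hη₁) (by positivity)) (by positivity)
        (by positivity) k m).2

lemma abs_aCoef_sub_le (hL : 0 ≤ lam * t) (hη₁ : 0 ≤ η₁) (hη₂ : 0 ≤ η₂)
    (hp : 0 ≤ p) (hq : 0 ≤ q) (k : ℕ) :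
    |aCoef lam t η₁ η₂ p q k -
        η₁ * lam * t * p * Real.exp (η₂ * lam * t * q / (η₁ + η₂) - lam * t) *
          ((η₁ * lam * t * p) ^ k / (k.factorial * (k + 1).factorial : ℝ))| ≤
      η₁ * lam * t * p * Real.exp (2 * (lam * t * p) + 2 * (lam * t * q) - lam * t) *
        ((η₁ * lam * t * p) ^ k / (k.factorial * (k + 2).factorial : ℝ)) := by
  have hpow : (η₁ * lam * t * p) ^ (k + 1) = η₁ ^ (k + 1) * (lam * t * p) ^ (k + 1) := by
    rw [← mul_pow]; ring
  have hscale (r : ℝ) (n : ℕ) : η₁ * lam * t * p * Real.exp (r - lam * t) *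
      ((η₁ * lam * t * p) ^ k / (k.factorial * n.factorial : ℝ)) =
      η₁ ^ (k + 1) / (k.factorial : ℝ) * (Real.exp (-(lam * t)) *
        ((lam * t * p) ^ (k + 1) / (n.factorial : ℝ) * Real.exp r)) := by
    rw [sub_eq_add_neg, Real.exp_add]
    linear_combination (Real.exp r * Real.exp (-(lam * t)) / (k.factorial * n.factorial)) * hpow
  rw [hscale, hscale, aCoef, ← mul_sub, abs_mul, abs_of_nonneg (by positivity),
    show η₂ * lam * t * q / (η₁ + η₂) = η₂ / (η₁ + η₂) * (lam * t * q) by ring]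
  gcongr
  exact abs_tsum_poisCoef_mul_Pcoef_sub_le hL hη₁ hη₂ hp hq (k + 1)

end

/-! ### Modified Bessel functions of integer order -/

/-- `ρ_{α,β}(u) = u^α e^{β√u}`, the asymptotic scale of the Bessel series in `u` and of the density
in `u = log x`. Since `ρ_{α,β}(u) u^{-1/2} = ρ_{α-1/2,β}(u)`, a relative error `O(u^{-1/2})` is an
absolute error `O(ρ_{α-1/2,β})`. -/
noncomputable def rpowExpSqrt (α β u : ℝ) : ℝ := u ^ α * Real.exp (β * √u)

/-- The everywhere convergent series `∑ y^k / (k! (k+n)!)`, which is `y^{-n/2} I_n(2√y)` for the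
modified Bessel function `I_n`. -/
noncomputable def besselSeries (n : ℕ) (y : ℝ) : ℝ :=
  ∑' k : ℕ, y ^ k / (k.factorial * (k + n).factorial : ℝ)

section
open Real

lemma integral_cos_pow_two_mul (k : ℕ) :
    ∫ x in 0..π, cos x ^ (2 * k) =
      π * ((2 * k).factorial / (4 ^ k * k.factorial * k.factorial : ℝ)) := by
  induction k with
  | zero => simp
  | succ k ih =>
    rw [show 2 * (k + 1) = 2 * k + 2 by ring, integral_cos_pow, ih, Nat.factorial_succ (2 * k + 1),
      Nat.factorial_succ (2 * k), Nat.factorial_succ k, sin_pi, sin_zero, pow_succ (4 : ℝ)]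
    push_cast
    field_simp
    ring

lemma integral_sin_pow_two_mul_mul_cos_pow_two_mul (n k : ℕ) :
    ∫ x in 0..π, sin x ^ (2 * n) * cos x ^ (2 * k) =
      π * ((2 * n).factorial * (2 * k).factorial /
        (4 ^ (n + k) * n.factorial * k.factorial * (n + k).factorial : ℝ)) := by
  induction n generalizing k with
  | zero => simp [integral_cos_pow_two_mul]
  | succ n ih =>
    have hsplit (x : ℝ) : sin x ^ (2 * (n + 1)) * cos x ^ (2 * k) =
        sin x ^ (2 * n) * cos x ^ (2 * k) - sin x ^ (2 * n) * cos x ^ (2 * (k + 1)) := by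
      rw [mul_add, pow_add, mul_one, sin_sq]; ring
    simp_rw [hsplit]
    rw [intervalIntegral.integral_sub (by apply Continuous.intervalIntegrable; fun_prop)
      (by apply Continuous.intervalIntegrable; fun_prop), ih, ih,
      show n + 1 + k = n + k + 1 by ring,
      show n + (k + 1) = n + k + 1 by ring, mul_add, mul_add, mul_one]
    simp only [Nat.factorial_succ, pow_succ]
    push_cast
    field_simp
    ring

lemma hasSum_integral_sin_pow_mul_cosh (n : ℕ) (z : ℝ) :
    HasSum (fun k : ℕ => z ^ (2 * k) / ((2 * k).factorial : ℝ) *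
        ∫ x in 0..π, sin x ^ n * cos x ^ (2 * k))
      (∫ x in 0..π, sin x ^ n * cosh (z * cos x)) := by
  simp_rw [← intervalIntegral.integral_const_mul]
  refine intervalIntegral.hasSum_integral_of_dominated_convergence
    (fun k _ => |z| ^ (2 * k) / ((2 * k).factorial : ℝ))
    (fun k => by apply Continuous.aestronglyMeasurable; fun_prop)
    (fun k => .of_forall fun x _ => ?_)
    (.of_forall fun x _ => (hasSum_cosh _).summable) (by simp) (.of_forall fun x _ => ?_)
  · rw [norm_mul, norm_div, norm_mul, norm_pow, norm_pow, norm_pow, norm_natCast]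
    refine mul_le_of_le_one_right (by positivity) ?_
    exact mul_le_one₀ (pow_le_one₀ (norm_nonneg _) (abs_sin_le_one _)) (by positivity)
      (pow_le_one₀ (norm_nonneg _) (abs_cos_le_one _))
  · refine ((hasSum_cosh (z * cos x)).mul_left (sin x ^ n)).congr_fun fun k => ?_
    rw [mul_pow]; ring

lemma integral_sin_pow_mul_cosh (n : ℕ) (z : ℝ) :
    ∫ x in 0..π, sin x ^ n * cosh (z * cos x) = ∫ x in 0..π, sin x ^ n * exp (z * cos x) := by
  have hreflect : ∫ x in 0..π, sin x ^ n * exp (-(z * cos x)) =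
      ∫ x in 0..π, sin x ^ n * exp (z * cos x) := by
    simpa using intervalIntegral.integral_comp_sub_left (a := 0) (b := π)
      (fun x => sin x ^ n * exp (z * cos x)) π
  have hsplit (x : ℝ) : sin x ^ n * cosh (z * cos x) =
      (sin x ^ n * exp (z * cos x) + sin x ^ n * exp (-(z * cos x))) / 2 := by
    rw [cosh_eq]; ring
  simp_rw [hsplit]
  rw [intervalIntegral.integral_div,
    intervalIntegral.integral_add (by apply Continuous.intervalIntegrable; fun_prop)
    (by apply Continuous.intervalIntegrable; fun_prop), hreflect, add_self_div_two]

/-- Poisson's integral representation of the modified Bessel function. -/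
lemma hasSum_besselSeries (n : ℕ) {y : ℝ} (hy : 0 ≤ y) :
    HasSum (fun k : ℕ => y ^ k / (k.factorial * (k + n).factorial : ℝ))
      (4 ^ n * n.factorial / (π * (2 * n).factorial) *
        ∫ x in 0..π, sin x ^ (2 * n) * exp (2 * √y * cos x)) := by
  rw [← integral_sin_pow_mul_cosh]
  refine ((hasSum_integral_sin_pow_mul_cosh (2 * n) (2 * √y)).mul_left _).congr_fun fun k => ?_
  rw [integral_sin_pow_two_mul_mul_cos_pow_two_mul, pow_mul, mul_pow, sq_sqrt hy, mul_pow, pow_add,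
    add_comm k n]
  norm_num
  field_simp

lemma integral_sin_pow_mul_exp_eq_integral_Ioi (n : ℕ) (z : ℝ) :
    ∫ x in 0..π, sin x ^ (2 * (n + 1)) * exp (z * cos x) =
      exp z * ∫ v in Set.Ioi 0, √(v * (2 - v)) ^ (2 * n + 1) * exp (-(z * v)) := by
  have hsin {x : ℝ} (hx : x ∈ Set.uIcc 0 π) : √((1 - cos x) * (2 - (1 - cos x))) = sin x := by
    rw [Set.uIcc_of_le pi_pos.le] at hx
    rw [show (1 - cos x) * (2 - (1 - cos x)) = sin x ^ 2 by rw [sin_sq]; ring,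
      sqrt_sq (sin_nonneg_of_mem_Icc hx)]
  have hsubst := intervalIntegral.integral_comp_mul_deriv (a := 0) (b := π)
    (f := fun x => 1 - cos x) (f' := sin)
    (g := fun v => √(v * (2 - v)) ^ (2 * n + 1) * exp (-(z * v)))
    (fun x _ => by simpa using (hasDerivAt_cos x).const_sub 1) continuous_sin.continuousOn
    (by fun_prop)
  rw [cos_zero, cos_pi, sub_self, show (1 : ℝ) - -1 = 2 by norm_num,
    intervalIntegral.integral_of_le zero_le_two] at hsubst
  -- The square root of a negative number is `0`, so the integrand vanishes for `v > 2`.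
  have htail : ∀ v ∈ Set.Ioi (0 : ℝ) \ Set.Ioc 0 2,
      √(v * (2 - v)) ^ (2 * n + 1) * exp (-(z * v)) = 0 := fun v ⟨hv, hv'⟩ => by
    have hv2 : 2 < v := not_le.mp fun h => hv' ⟨hv, h⟩
    rw [sqrt_eq_zero_of_nonpos (mul_nonpos_of_nonneg_of_nonpos (le_of_lt hv) (by linarith)),
      zero_pow (by omega), zero_mul]
  rw [setIntegral_eq_of_subset_of_forall_sdiff_eq_zero measurableSet_Ioi Set.Ioc_subset_Ioi_self
    htail, ← hsubst, ← intervalIntegral.integral_const_mul]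
  refine intervalIntegral.integral_congr fun x hx => ?_
  simp only [Function.comp_apply]
  rw [hsin hx, show -(z * (1 - cos x)) = -z + z * cos x by ring, exp_add, exp_neg]
  field_simp
  ring

lemma abs_integral_mul_exp_sub_le {f : ℝ → ℝ} {A B s z : ℝ}
    (hf : AEStronglyMeasurable f (volume.restrict (Set.Ioi 0))) (hs : 0 < s) (hz : 0 < z)
    (hfA : ∀ v, 0 < v → |f v - A * v ^ (s - 1)| ≤ B * v ^ s) :
    |(∫ v in Set.Ioi 0, f v * exp (-(z * v))) - A * (z ^ (-s) * Gamma s)| ≤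
      B * (z ^ (-(s + 1)) * Gamma (s + 1)) := by
  have hint {r : ℝ} (hr : 0 < r) :
      IntegrableOn (fun v => v ^ (r - 1) * exp (-(z * v))) (Set.Ioi 0) := by
    simpa using integrableOn_rpow_mul_exp_neg_mul_rpow (by linarith : -1 < r - 1) one_pos hz
  have hGamma {r : ℝ} (hr : 0 < r) :
      ∫ v in Set.Ioi 0, v ^ (r - 1) * exp (-(z * v)) = z ^ (-r) * Gamma r := by
    rw [integral_rpow_mul_exp_neg_mul_Ioi hr hz, one_div, inv_rpow hz.le, rpow_neg hz.le]
  have hbound : ∀ᵐ v ∂volume.restrict (Set.Ioi 0),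
      ‖f v * exp (-(z * v)) - A * (v ^ (s - 1) * exp (-(z * v)))‖ ≤
        B * (v ^ (s + 1 - 1) * exp (-(z * v))) := by
    filter_upwards [ae_restrict_mem measurableSet_Ioi] with v hv
    rw [← mul_assoc, ← sub_mul, norm_mul, norm_of_nonneg (exp_pos _).le, ← mul_assoc,
      add_sub_cancel_right]
    exact mul_le_mul_of_nonneg_right (hfA v hv) (exp_pos _).le
  have hmain := (hint hs).const_mul A
  have herr := (hint (by linarith : 0 < s + 1)).const_mul B
  have hexp : Continuous fun v => exp (-(z * v)) := by fun_prop
  have hdiff := herr.mono' ((hf.mul hexp.aestronglyMeasurable).sub hmain.1) hbound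
  have hfint : IntegrableOn (fun v => f v * exp (-(z * v))) (Set.Ioi 0) :=
    (hdiff.add hmain).congr (.of_forall fun v => sub_add_cancel _ _)
  rw [← hGamma hs, ← hGamma (by linarith : 0 < s + 1), ← integral_const_mul,
    ← integral_const_mul, ← integral_sub hfint hmain]
  exact norm_integral_le_of_norm_le herr hbound

lemma abs_sqrt_two_sub_sub_sqrt_two_le {v : ℝ} (hv : 0 ≤ v) : |√(2 - v) - √2| ≤ v := by
  have hmono : √(2 - v) ≤ √2 := sqrt_le_sqrt (by linarith)
  have hlower : √2 - v ≤ √(2 - v) := by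
    rcases le_total √2 v with h | h
    · linarith [sqrt_nonneg (2 - v)]
    · refine (le_abs_self _).trans (abs_le_sqrt ?_)
      nlinarith [sq_sqrt (zero_le_two (α := ℝ)), one_lt_sqrt_two, mul_nonneg hv (sub_nonneg.mpr h)]
  rw [abs_le]
  exact ⟨by linarith, by linarith⟩

lemma abs_sqrt_pow_sub_le (n : ℕ) {v : ℝ} (hv : 0 < v) :
    |√(v * (2 - v)) ^ (2 * n + 1) - √2 ^ (2 * n + 1) * v ^ (n + 3 / 2 - 1 : ℝ)| ≤
      (2 * n + 1 : ℕ) * √2 ^ (2 * n) * v ^ (n + 3 / 2 : ℝ) := by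
  have hsqrt : √v ^ (2 * n + 1) = v ^ (n + 3 / 2 - 1 : ℝ) := by
    rw [sqrt_eq_rpow, ← rpow_natCast, ← rpow_mul hv.le]
    congr 1
    push_cast
    ring
  have hmax : max |√(2 - v)| |√2| ≤ √2 := by
    rw [abs_of_nonneg (sqrt_nonneg _), abs_of_nonneg (sqrt_nonneg _)]
    exact max_le (sqrt_le_sqrt (by linarith)) le_rfl
  have hdiff := calc |√(2 - v) ^ (2 * n + 1) - √2 ^ (2 * n + 1)|
      ≤ |√(2 - v) - √2| * (2 * n + 1 : ℕ) * max |√(2 - v)| |√2| ^ (2 * n) := abs_pow_sub_pow_le ..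
    _ ≤ v * (2 * n + 1 : ℕ) * √2 ^ (2 * n) := by
      gcongr
      exact abs_sqrt_two_sub_sub_sqrt_two_le hv.le
  rw [sqrt_mul hv.le, mul_pow, hsqrt, mul_comm (√2 ^ _), ← mul_sub, abs_mul,
    abs_of_nonneg (rpow_nonneg hv.le _)]
  calc v ^ (n + 3 / 2 - 1 : ℝ) * |√(2 - v) ^ (2 * n + 1) - √2 ^ (2 * n + 1)|
      ≤ v ^ (n + 3 / 2 - 1 : ℝ) * (v * (2 * n + 1 : ℕ) * √2 ^ (2 * n)) := by gcongr
    _ = _ := by rw [rpow_sub_one hv.ne']; field_simp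

end

section
open Real

lemma four_pow_mul_factorial_div_mul_Gamma (n : ℕ) :
    4 ^ n * n.factorial / (π * (2 * n).factorial) * Gamma (n + 1 / 2) = 1 / √π := by
  have hfac : ((2 * n).factorial : ℝ) = 2 ^ n * n.factorial * (2 * n - 1).doubleFactorial := by
    cases n with
    | zero => simp
    | succ m =>
      rw [show 2 * (m + 1) = 2 * m + 1 + 1 by ring, Nat.factorial_eq_mul_doubleFactorial,
        show 2 * m + 1 + 1 = 2 * (m + 1) by ring, Nat.doubleFactorial_two_mul]
      push_cast
      rfl
  have hdf : ((2 * n - 1).doubleFactorial : ℝ) ≠ 0 := by positivity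
  rw [Gamma_nat_add_half, hfac, show (4 : ℝ) = 2 * 2 by norm_num, mul_pow]
  nth_rewrite 1 [← mul_self_sqrt pi_pos.le]
  field_simp

lemma two_mul_sqrt_rpow {y : ℝ} (hy : 0 ≤ y) (s : ℝ) : (2 * √y) ^ s = 2 ^ s * y ^ (s / 2) := by
  rw [mul_rpow zero_le_two (sqrt_nonneg y), sqrt_eq_rpow, ← rpow_mul hy]
  ring_nf

lemma sqrt_two_pow_mul_rpow (n : ℕ) :
    √2 ^ (2 * n + 1) * (2 : ℝ) ^ (-(n + 3 / 2) : ℝ) = 1 / 2 := by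
  rw [sqrt_eq_rpow, ← rpow_natCast, ← rpow_mul zero_le_two, ← rpow_add two_pos]
  push_cast
  ring_nf
  norm_num [rpow_neg_one]

lemma rpowExpSqrt_nonneg (α β : ℝ) {u : ℝ} (hu : 0 ≤ u) : 0 ≤ rpowExpSqrt α β u :=
  mul_nonneg (rpow_nonneg hu α) (exp_pos _).le

-- Laplace's method: only the end point `x = 0` of Poisson's integral contributes.
lemma besselSeries_succ_sub_isBigO (n : ℕ) :
    (fun y => besselSeries (n + 1) y - 1 / (2 * √π) * rpowExpSqrt (-(n / 2) - 3 / 4) 2 y)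
      =O[atTop] rpowExpSqrt (-(n / 2) - 5 / 4) 2 := by
  set K : ℝ := 4 ^ (n + 1) * (n + 1).factorial / (π * (2 * (n + 1)).factorial)
  set B : ℝ := (2 * n + 1 : ℕ) * √2 ^ (2 * n)
  refine .of_bound (K * B * 2 ^ (-(n + 3 / 2 + 1) : ℝ) * Gamma (n + 3 / 2 + 1)) ?_
  filter_upwards [eventually_gt_atTop 0] with y hy
  have hwatson := abs_integral_mul_exp_sub_le (f := fun v => √(v * (2 - v)) ^ (2 * n + 1))
    (by fun_prop : Continuous _).aestronglyMeasurable (by positivity)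
    (by positivity : 0 < 2 * √y) fun v hv => abs_sqrt_pow_sub_le n hv
  set J := ∫ v in Set.Ioi 0, √(v * (2 - v)) ^ (2 * n + 1) * exp (-(2 * √y * v))
  have hseries : besselSeries (n + 1) y = K * (exp (2 * √y) * J) := by
    rw [besselSeries, (hasSum_besselSeries (n + 1) hy.le).tsum_eq,
      integral_sin_pow_mul_exp_eq_integral_Ioi]
  have hKGamma : K * Gamma (n + 3 / 2) = 1 / √π := by
    rw [← four_pow_mul_factorial_div_mul_Gamma (n + 1),
      show ((n + 1 : ℕ) + 1 / 2 : ℝ) = n + 3 / 2 by push_cast; ring]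
  have hconst : K * (√2 ^ (2 * n + 1) * (2 ^ (-(n + 3 / 2) : ℝ) * Gamma (n + 3 / 2))) =
      1 / (2 * √π) := by
    rw [← mul_assoc (√2 ^ _), sqrt_two_pow_mul_rpow, mul_left_comm, hKGamma]
    ring
  rw [two_mul_sqrt_rpow hy.le, two_mul_sqrt_rpow hy.le,
    show -(n + 3 / 2 : ℝ) / 2 = -(n / 2) - 3 / 4 by ring,
    show -(n + 3 / 2 + 1 : ℝ) / 2 = -(n / 2) - 5 / 4 by ring] at hwatson
  have hfactor : 0 ≤ K * exp (2 * √y) := by positivity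
  rw [norm_of_nonneg (rpowExpSqrt_nonneg _ _ hy.le), hseries, ← hconst, rpowExpSqrt, rpowExpSqrt]
  calc _ = ‖K * exp (2 * √y) * (J - √2 ^ (2 * n + 1) *
          (2 ^ (-(n + 3 / 2) : ℝ) * y ^ (-(n / 2) - 3 / 4 : ℝ) * Gamma (n + 3 / 2)))‖ := by
        ring_nf
    _ ≤ K * exp (2 * √y) * (B *
          (2 ^ (-(n + 3 / 2 + 1) : ℝ) * y ^ (-(n / 2) - 5 / 4 : ℝ) * Gamma (n + 3 / 2 + 1))) := by
        rw [norm_mul, norm_of_nonneg hfactor]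
        gcongr
        exact hwatson
    _ = _ := by ring

end

section
open Real

lemma rpowExpSqrt_const_mul (α β : ℝ) {c u : ℝ} (hc : 0 ≤ c) (hu : 0 ≤ u) :
    rpowExpSqrt α β (c * u) = c ^ α * rpowExpSqrt α (β * √c) u := by
  rw [rpowExpSqrt, rpowExpSqrt, mul_rpow hc hu, sqrt_mul hc, mul_assoc, mul_assoc]

lemma rpowExpSqrt_isBigO_of_le {α α' : ℝ} (β : ℝ) (h : α ≤ α') :
    rpowExpSqrt α β =O[atTop] rpowExpSqrt α' β := by
  refine .of_bound 1 ?_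
  filter_upwards [eventually_ge_atTop 1] with u hu
  rw [norm_of_nonneg (rpowExpSqrt_nonneg _ _ (by linarith)),
    norm_of_nonneg (rpowExpSqrt_nonneg _ _ (by linarith)), one_mul]
  exact mul_le_mul_of_nonneg_right (rpow_le_rpow_of_exponent_le hu h) (exp_pos _).le

lemma besselSeries_succ_isBigO (n : ℕ) :
    besselSeries (n + 1) =O[atTop] rpowExpSqrt (-(n / 2) - 3 / 4) 2 := by
  have herror := (besselSeries_succ_sub_isBigO n).trans
    (rpowExpSqrt_isBigO_of_le 2 (by linarith : -(n / 2) - 5 / 4 ≤ (-(n / 2) - 3 / 4 : ℝ)))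
  simpa using herror.add ((isBigO_refl (rpowExpSqrt (-(n / 2) - 3 / 4) 2) atTop).const_mul_left
    (1 / (2 * √π)))

lemma besselSeries_mul_le (n : ℕ) {a b : ℝ} (ha : 0 ≤ a) (hb : 0 ≤ b) :
    besselSeries n (a * b) ≤ exp a * exp b := by
  refine hasSum_le (fun k => ?_) (hasSum_besselSeries n (mul_nonneg ha hb)).summable.hasSum
    ((hasSum_pow_div_factorial b).mul_left (exp a))
  have hfac : (k.factorial : ℝ) ≤ (k + n).factorial := by
    exact_mod_cast Nat.factorial_le (Nat.le_add_right k n)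
  calc (a * b) ^ k / (k.factorial * (k + n).factorial : ℝ)
      ≤ (a * b) ^ k / (k.factorial * k.factorial : ℝ) := by gcongr
    _ = a ^ k / k.factorial * (b ^ k / k.factorial) := by rw [mul_pow, mul_div_mul_comm]
    _ ≤ exp a * (b ^ k / k.factorial) := by
      gcongr
      exact pow_div_factorial_le_exp a ha k

end

section
variable {lam t η₁ η₂ p q : ℝ}

lemma summable_aCoef_mul_pow_and_abs_G1_sub_le (hL : 0 ≤ lam * t) (hη₁ : 0 ≤ η₁) (hη₂ : 0 ≤ η₂)
    (hp : 0 ≤ p) (hq : 0 ≤ q) {u : ℝ} (hu : 0 ≤ u) :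
    Summable (fun k : ℕ => aCoef lam t η₁ η₂ p q k * u ^ k) ∧
      |G1 lam t η₁ η₂ p q u -
          η₁ * lam * t * p * Real.exp (η₂ * lam * t * q / (η₁ + η₂) - lam * t) *
            besselSeries 1 (η₁ * lam * t * p * u)| ≤
        η₁ * lam * t * p * Real.exp (2 * (lam * t * p) + 2 * (lam * t * q) - lam * t) *
          besselSeries 2 (η₁ * lam * t * p * u) := by
  have hc : 0 ≤ η₁ * lam * t * p := by
    rw [mul_assoc η₁]; positivity
  have hbessel (n : ℕ) := (hasSum_besselSeries n (mul_nonneg hc hu)).summable.hasSum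
  refine summable_and_abs_tsum_sub_le ((hbessel 1).mul_left _) ((hbessel 2).mul_left _) fun k => ?_
  have hterm (E : ℝ) (n : ℕ) : E * ((η₁ * lam * t * p * u) ^ k /
      (k.factorial * (k + n).factorial : ℝ)) =
      E * ((η₁ * lam * t * p) ^ k / (k.factorial * (k + n).factorial : ℝ)) * u ^ k := by
    rw [mul_pow _ u]; ring
  rw [hterm, hterm, ← sub_mul, abs_mul, abs_of_nonneg (pow_nonneg hu k)]
  exact mul_le_mul_of_nonneg_right (abs_aCoef_sub_le hL hη₁ hη₂ hp hq k) (pow_nonneg hu k)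

lemma measurable_G1 (hL : 0 ≤ lam * t) (hη₁ : 0 ≤ η₁) (hη₂ : 0 ≤ η₂) (hp : 0 ≤ p) (hq : 0 ≤ q) :
    Measurable (G1 lam t η₁ η₂ p q) := by
  have hsummable (u : ℝ) : Summable fun k : ℕ => aCoef lam t η₁ η₂ p q k * u ^ k := by
    refine .of_abs ?_
    simpa only [abs_mul, abs_pow, abs_abs] using
      (summable_aCoef_mul_pow_and_abs_G1_sub_le hL hη₁ hη₂ hp hq (abs_nonneg u)).1.abs
  exact measurable_of_tendsto_metrizable
    (f := fun n u => ∑ k ∈ Finset.range n, aCoef lam t η₁ η₂ p q k * u ^ k)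
    (fun n => by fun_prop) (tendsto_pi_nhds.mpr fun u => (hsummable u).hasSum.tendsto_sum_nat)

lemma exists_abs_G1_le_mul_exp (hL : 0 ≤ lam * t) (hη₁ : 0 ≤ η₁) (hη₂ : 0 ≤ η₂)
    (hp : 0 ≤ p) (hq : 0 ≤ q) {δ : ℝ} (hδ : 0 < δ) :
    ∃ M, ∀ u, 0 ≤ u → |G1 lam t η₁ η₂ p q u| ≤ M * Real.exp (δ * u) := by
  set c := η₁ * lam * t * p with hc
  have hc0 : 0 ≤ c := by rw [hc, mul_assoc η₁]; positivity
  set E := Real.exp (η₂ * lam * t * q / (η₁ + η₂) - lam * t)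
  set E' := Real.exp (2 * (lam * t * p) + 2 * (lam * t * q) - lam * t)
  refine ⟨c * (E + E') * Real.exp (c / δ), fun u hu => ?_⟩
  have hbessel (n : ℕ) : besselSeries n (c * u) ≤ Real.exp (c / δ) * Real.exp (δ * u) := by
    rw [show c * u = c / δ * (δ * u) by field_simp]
    exact besselSeries_mul_le n (by positivity) (by positivity)
  have hG1 := (summable_aCoef_mul_pow_and_abs_G1_sub_le hL hη₁ hη₂ hp hq hu).2
  have hbessel_nonneg : 0 ≤ besselSeries 1 (c * u) := tsum_nonneg fun k => by positivity
  calc |G1 lam t η₁ η₂ p q u|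
      ≤ c * E * besselSeries 1 (c * u) + c * E' * besselSeries 2 (c * u) := by
        have := abs_add_le (G1 lam t η₁ η₂ p q u - c * E * besselSeries 1 (c * u))
          (c * E * besselSeries 1 (c * u))
        rw [sub_add_cancel, abs_of_nonneg (a := c * E * besselSeries 1 (c * u)) (by positivity)]
          at this
        linarith
    _ ≤ c * E * (Real.exp (c / δ) * Real.exp (δ * u)) +
          c * E' * (Real.exp (c / δ) * Real.exp (δ * u)) := by
        gcongr <;> exact hbessel _
    _ = c * (E + E') * Real.exp (c / δ) * Real.exp (δ * u) := by ring

lemma G1_sub_isBigO (hL : 0 < lam * t) (hη₁ : 0 < η₁) (hη₂ : 0 ≤ η₂) (hp : 0 < p) (hq : 0 ≤ q) :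
    (fun u => G1 lam t η₁ η₂ p q u -
        1 / (2 * √Real.pi) * (η₁ * lam * t * p) ^ (1 / 4 : ℝ) *
          Real.exp (η₂ * lam * t * q / (η₁ + η₂) - lam * t) *
          rpowExpSqrt (-3 / 4) (2 * √(η₁ * lam * t * p)) u)
      =O[atTop] rpowExpSqrt (-5 / 4) (2 * √(η₁ * lam * t * p)) := by
  set c := η₁ * lam * t * p with hcdef
  have hc : 0 < c := by rw [hcdef, mul_assoc η₁]; positivity
  set E := Real.exp (η₂ * lam * t * q / (η₁ + η₂) - lam * t)
  have hscale : Tendsto (fun u => c * u) atTop atTop := tendsto_id.const_mul_atTop hc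
  have hrho (α : ℝ) : (fun u => rpowExpSqrt α 2 (c * u)) =ᶠ[atTop]
      fun u => c ^ α * rpowExpSqrt α (2 * √c) u := by
    filter_upwards [eventually_ge_atTop 0] with u hu using rpowExpSqrt_const_mul α 2 hc.le hu
  have hrho_isBigO : (fun u => rpowExpSqrt (-5 / 4) 2 (c * u)) =O[atTop]
      rpowExpSqrt (-5 / 4) (2 * √c) :=
    (hrho _).trans_isBigO ((isBigO_refl _ _).const_mul_left _)
  have hseries : (fun u => G1 lam t η₁ η₂ p q u - c * E * besselSeries 1 (c * u)) =O[atTop]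
      fun u => besselSeries 2 (c * u) := by
    refine .of_bound (c * Real.exp (2 * (lam * t * p) + 2 * (lam * t * q) - lam * t)) ?_
    filter_upwards [eventually_ge_atTop 0] with u hu
    exact (summable_aCoef_mul_pow_and_abs_G1_sub_le hL.le hη₁.le hη₂ hp.le hq hu).2.trans
      (by gcongr; exact le_abs_self _)
  have hbessel_two : (fun u => besselSeries 2 (c * u)) =O[atTop]
      fun u => rpowExpSqrt (-5 / 4) 2 (c * u) := by
    have hasymp := besselSeries_succ_isBigO 1
    rw [show (-((1 : ℕ) / 2) - 3 / 4 : ℝ) = -5 / 4 by norm_num] at hasymp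
    exact hasymp.comp_tendsto hscale
  have hbessel_one : (fun u => besselSeries 1 (c * u) -
      1 / (2 * √Real.pi) * rpowExpSqrt (-3 / 4) 2 (c * u)) =O[atTop]
      fun u => rpowExpSqrt (-5 / 4) 2 (c * u) := by
    convert (besselSeries_succ_sub_isBigO 0).comp_tendsto hscale using 4 <;> norm_num
  have hpow : c * c ^ (-3 / 4 : ℝ) = c ^ (1 / 4 : ℝ) := by
    rw [← Real.rpow_one_add' hc.le (by norm_num)]; norm_num
  refine (((hseries.trans hbessel_two).add (hbessel_one.const_mul_left (c * E))).congr' ?_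
    .rfl).trans hrho_isBigO
  filter_upwards [hrho (-3 / 4)] with u hu
  rw [hu, ← hpow]
  ring

end

/-! ### Asymptotics of convolutions -/

section
open Real

lemma abs_exp_sub_one_le_mul_exp_abs (θ : ℝ) : |exp θ - 1| ≤ |θ| * exp |θ| := by
  have h := Complex.norm_exp_sub_sum_le_norm_mul_exp θ 1
  simp only [Finset.sum_range_one, pow_zero, Nat.factorial_zero, Nat.cast_one, div_one, pow_one,
    Complex.norm_real, norm_eq_abs] at h
  exact_mod_cast h

lemma abs_log_sub_log_le {s u w : ℝ} (hs : 0 < s) (hu : s ≤ u) (hw : s ≤ w) :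
    |log w - log u| ≤ |w - u| / s := by
  wlog huw : u ≤ w generalizing u w
  · rw [abs_sub_comm, abs_sub_comm w]
    exact this hw hu (le_of_not_ge huw)
  have hu0 : 0 < u := hs.trans_le hu
  rw [abs_of_nonneg (sub_nonneg.mpr (log_le_log hu0 huw)), abs_of_nonneg (sub_nonneg.mpr huw),
    ← log_div (by linarith) hu0.ne']
  calc log (w / u) ≤ w / u - 1 := log_le_sub_one_of_pos (div_pos (by linarith) hu0)
    _ = (w - u) / u := by field_simp
    _ ≤ (w - u) / s := by gcongr

lemma abs_sqrt_sub_sqrt_le {u w : ℝ} (hu : 0 < u) (hw : 0 ≤ w) : |√w - √u| ≤ |w - u| / √u := by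
  rw [le_div_iff₀ (sqrt_pos.mpr hu)]
  calc |√w - √u| * √u ≤ |√w - √u| * |√w + √u| := by
        gcongr
        exact (le_add_of_nonneg_left (sqrt_nonneg w)).trans (le_abs_self _)
    _ = |w - u| := by
      rw [← abs_mul, mul_comm, ← mul_self_sub_mul_self, mul_self_sqrt hw, mul_self_sqrt hu.le]

lemma rpowExpSqrt_eq_exp (α β : ℝ) {u : ℝ} (hu : 0 < u) :
    rpowExpSqrt α β u = exp (α * log u + β * √u) := by
  rw [rpowExpSqrt, rpow_def_of_pos hu, ← exp_add, mul_comm α]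

lemma rpowExpSqrt_div_sqrt (α β : ℝ) {u : ℝ} (hu : 0 < u) :
    rpowExpSqrt α β u / √u = rpowExpSqrt (α - 1 / 2) β u := by
  rw [rpowExpSqrt, rpowExpSqrt, rpow_sub hu, ← sqrt_eq_rpow, div_mul_eq_mul_div]

lemma exists_rpowExpSqrt_sub_eq_mul_exp (α β : ℝ) {u v : ℝ} (hu : 1 ≤ u) (hv : |v| ≤ u / 2) :
    ∃ θ, |θ| ≤ (2 * |α| + |β|) * (|v| / √u) ∧
      rpowExpSqrt α β (u - v) = rpowExpSqrt α β u * exp θ := by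
  have hw : u / 2 ≤ u - v := by linarith [(abs_le.mp hv).2]
  have hwu : |u - v - u| = |v| := by rw [sub_sub_cancel_left, abs_neg]
  refine ⟨α * (log (u - v) - log u) + β * (√(u - v) - √u), ?_, ?_⟩
  · have hlog : |log (u - v) - log u| ≤ 2 * (|v| / √u) := by
      refine (abs_log_sub_log_le (s := u / 2) (by linarith) (by linarith) hw).trans ?_
      rw [hwu, div_div_eq_mul_div, mul_comm |v|, mul_div_assoc]
      gcongr
      exact sqrt_le_self_iff.mpr (.inr hu)
    have hsqrt : |√(u - v) - √u| ≤ |v| / √u := by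
      simpa only [hwu] using abs_sqrt_sub_sqrt_le (by linarith : 0 < u) (by linarith : 0 ≤ u - v)
    calc _ ≤ |α| * |log (u - v) - log u| + |β| * |√(u - v) - √u| := by
          rw [← abs_mul, ← abs_mul]; exact abs_add_le _ _
      _ ≤ |α| * (2 * (|v| / √u)) + |β| * (|v| / √u) := by gcongr
      _ = _ := by ring
  · rw [rpowExpSqrt_eq_exp α β (by linarith), rpowExpSqrt_eq_exp α β (by linarith), ← exp_add]
    ring_nf

lemma eventually_mul_div_sqrt_le (D : ℝ) {ε : ℝ} (hε : 0 < ε) :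
    ∀ᶠ u in atTop, ∀ r, 0 ≤ r → D * (r / √u) ≤ ε * r := by
  filter_upwards [(tendsto_sqrt_atTop.const_div_atTop D).eventually_le_const hε] with u hu r hr
  calc D * (r / √u) = D / √u * r := by ring
    _ ≤ ε * r := by gcongr

lemma eventually_rpowExpSqrt_sub_le_mul_exp (α β : ℝ) {ε : ℝ} (hε : 0 < ε) :
    ∀ᶠ u in atTop, ∀ v, |v| ≤ u / 2 →
      rpowExpSqrt α β (u - v) ≤ rpowExpSqrt α β u * exp (ε * |v|) := by
  filter_upwards [eventually_ge_atTop 1,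
    eventually_mul_div_sqrt_le (2 * |α| + |β|) hε] with u hu hε_le v hv
  obtain ⟨θ, hθ, hshift⟩ := exists_rpowExpSqrt_sub_eq_mul_exp α β hu hv
  have hρ := rpowExpSqrt_nonneg α β (by linarith : 0 ≤ u)
  rw [hshift]
  gcongr
  exact (le_abs_self θ).trans (hθ.trans (hε_le _ (abs_nonneg v)))

lemma eventually_abs_rpowExpSqrt_sub_le (α β : ℝ) {ε : ℝ} (hε : 0 < ε) :
    ∃ C, ∀ᶠ u in atTop, ∀ v, |v| ≤ u / 2 →
      |rpowExpSqrt α β (u - v) - rpowExpSqrt α β u| ≤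
        C * rpowExpSqrt (α - 1 / 2) β u * exp (ε * |v|) := by
  set D := 2 * |α| + |β|
  refine ⟨D * (2 / ε), ?_⟩
  filter_upwards [eventually_ge_atTop 1,
    eventually_mul_div_sqrt_le D (half_pos hε)] with u hu hD_le v hv
  obtain ⟨θ, hθ, hshift⟩ := exists_rpowExpSqrt_sub_eq_mul_exp α β hu hv
  have hu0 : 0 < u := by linarith
  have hθε : |θ| ≤ ε / 2 * |v| := hθ.trans (hD_le _ (abs_nonneg v))
  have hv_le : |v| ≤ 2 / ε * exp (ε / 2 * |v|) := by
    rw [← div_le_iff₀' (by positivity), div_div_eq_mul_div]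
    linarith [add_one_le_exp (ε / 2 * |v|)]
  have hρ := rpowExpSqrt_nonneg α β hu0.le
  rw [hshift, ← mul_sub_one, abs_mul, abs_of_nonneg hρ, ← rpowExpSqrt_div_sqrt α β hu0]
  calc rpowExpSqrt α β u * |exp θ - 1|
      ≤ rpowExpSqrt α β u * (|θ| * exp |θ|) := by
        gcongr; exact abs_exp_sub_one_le_mul_exp_abs θ
    _ ≤ rpowExpSqrt α β u * (D * (2 / ε * exp (ε / 2 * |v|) / √u) * exp (ε / 2 * |v|)) := by
        gcongr
        exact hθ.trans (by gcongr)
    _ = D * (2 / ε) * (rpowExpSqrt α β u / √u) * (exp (ε / 2 * |v|) * exp (ε / 2 * |v|)) := by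
        ring
    _ = _ := by rw [← exp_add, ← add_mul, add_halves]

lemma eventually_exp_neg_le_rpowExpSqrt_and_le_exp (α β : ℝ) {δ : ℝ} (hδ : 0 < δ) :
    ∀ᶠ u in atTop, exp (-(δ * u)) ≤ rpowExpSqrt α β u ∧ rpowExpSqrt α β u ≤ exp (δ * u) := by
  have hsqrt : sqrt =o[atTop] (id : ℝ → ℝ) := by
    have hone : (fun _ => 1 : ℝ → ℝ) =o[atTop] sqrt :=
      isLittleO_const_left.mpr (.inr (tendsto_norm_atTop_atTop.comp tendsto_sqrt_atTop))
    refine ((isBigO_refl sqrt atTop).mul_isLittleO hone).congr' (by simp) ?_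
    filter_upwards [eventually_ge_atTop 0] with u hu using mul_self_sqrt hu
  have hphase : (fun u => α * log u + β * √u) =o[atTop] (id : ℝ → ℝ) :=
    (isLittleO_log_id_atTop.const_mul_left α).add (hsqrt.const_mul_left β)
  filter_upwards [hphase.def hδ, eventually_gt_atTop 0] with u hphase_le hu
  rw [norm_eq_abs, id, norm_of_nonneg hu.le, abs_le] at hphase_le
  rw [rpowExpSqrt_eq_exp α β hu, exp_le_exp, exp_le_exp]
  exact hphase_le

variable {α β ε K : ℝ} {Ψ : ℝ → ℝ}

lemma eventually_abs_sub_le_of_abs_le_half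
    (hΨ : (fun u => Ψ u - K * rpowExpSqrt α β u) =O[atTop] rpowExpSqrt (α - 1 / 2) β)
    (hε : 0 < ε) :
    ∃ C, ∀ᶠ u in atTop, ∀ v, |v| ≤ u / 2 →
      |Ψ (u - v) - K * rpowExpSqrt α β u| ≤
        C * rpowExpSqrt (α - 1 / 2) β u * exp (ε * |v|) := by
  obtain ⟨C, hC, hΨC⟩ := hΨ.exists_nonneg
  obtain ⟨u₀, hu₀⟩ := eventually_atTop.mp hΨC.bound
  obtain ⟨C₁, hC₁⟩ := eventually_abs_rpowExpSqrt_sub_le α β hε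
  refine ⟨C + |K| * C₁, ?_⟩
  filter_upwards [eventually_ge_atTop 0, eventually_ge_atTop (2 * u₀), hC₁,
    eventually_rpowExpSqrt_sub_le_mul_exp (α - 1 / 2) β hε] with u hu huu₀ hρ_sub hρ_shift v hv
  have huv : u / 2 ≤ u - v := by linarith [(abs_le.mp hv).2]
  have hΨuv := hu₀ (u - v) (by linarith)
  rw [norm_eq_abs, norm_of_nonneg (rpowExpSqrt_nonneg _ _ (by linarith))] at hΨuv
  calc |Ψ (u - v) - K * rpowExpSqrt α β u|
      ≤ |Ψ (u - v) - K * rpowExpSqrt α β (u - v)| +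
          |K| * |rpowExpSqrt α β (u - v) - rpowExpSqrt α β u| := by
        rw [← abs_mul, mul_sub]
        exact abs_sub_le _ _ _
    _ ≤ C * (rpowExpSqrt (α - 1 / 2) β u * exp (ε * |v|)) +
          |K| * (C₁ * rpowExpSqrt (α - 1 / 2) β u * exp (ε * |v|)) := by
        gcongr
        · exact hΨuv.trans (by gcongr; exact hρ_shift v hv)
        · exact hρ_sub v hv
    _ = _ := by ring

lemma eventually_abs_sub_le_of_half_le_abs (α β K : ℝ)
    (hΨ : ∀ δ, 0 < δ → ∃ M, ∀ w, |Ψ w| ≤ M * exp (δ * |w|)) (hε : 0 < ε) :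
    ∃ C, ∀ᶠ u in atTop, ∀ v, u / 2 ≤ |v| →
      |Ψ (u - v) - K * rpowExpSqrt α β u| ≤
        C * rpowExpSqrt (α - 1 / 2) β u * exp (ε * |v|) := by
  have hδ : 0 < ε / 5 := by positivity
  obtain ⟨M, hM⟩ := hΨ (ε / 5) hδ
  have hM0 : 0 ≤ M := by simpa using (abs_nonneg _).trans (hM 0)
  refine ⟨M + |K|, ?_⟩
  filter_upwards [eventually_ge_atTop 0, eventually_exp_neg_le_rpowExpSqrt_and_le_exp α β hδ,
    eventually_exp_neg_le_rpowExpSqrt_and_le_exp (α - 1 / 2) β hδ] with u hu ⟨_, hρ_le⟩ ⟨hle_ρ, _⟩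
    v hv
  have hρ := rpowExpSqrt_nonneg (α - 1 / 2) β hu
  have huv : |u - v| ≤ u + |v| := (abs_sub u v).trans_eq (by rw [abs_of_nonneg hu])
  have hexponent : ε / 5 * (2 * u + |v|) ≤ ε * |v| := by
    calc ε / 5 * (2 * u + |v|) ≤ ε / 5 * (5 * |v|) := by gcongr; linarith
      _ = ε * |v| := by ring
  calc |Ψ (u - v) - K * rpowExpSqrt α β u|
      ≤ |Ψ (u - v)| + |K| * rpowExpSqrt α β u := by
        refine (abs_sub _ _).trans_eq ?_
        rw [abs_mul, abs_of_nonneg (rpowExpSqrt_nonneg α β hu)]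
    _ ≤ M * exp (ε / 5 * (u + |v|)) + |K| * exp (ε / 5 * (u + |v|)) := by
        gcongr
        · exact (hM _).trans (by gcongr)
        · exact hρ_le.trans (by gcongr; exact le_add_of_nonneg_right (abs_nonneg v))
    _ = (M + |K|) * (exp (-(ε / 5 * u)) * exp (ε / 5 * (2 * u + |v|))) := by
        rw [← exp_add, ← add_mul]; ring_nf
    _ ≤ (M + |K|) * (rpowExpSqrt (α - 1 / 2) β u * exp (ε * |v|)) := by
        gcongr
    _ = _ := by ring

lemma eventually_abs_sub_le_mul_exp
    (hΨ_asymp : (fun u => Ψ u - K * rpowExpSqrt α β u) =O[atTop] rpowExpSqrt (α - 1 / 2) β)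
    (hΨ_growth : ∀ δ, 0 < δ → ∃ M, ∀ w, |Ψ w| ≤ M * exp (δ * |w|)) (hε : 0 < ε) :
    ∃ C, ∀ᶠ u in atTop, ∀ v,
      |Ψ (u - v) - K * rpowExpSqrt α β u| ≤
        C * rpowExpSqrt (α - 1 / 2) β u * exp (ε * |v|) := by
  obtain ⟨C₁, hC₁⟩ := eventually_abs_sub_le_of_abs_le_half hΨ_asymp hε
  obtain ⟨C₂, hC₂⟩ := eventually_abs_sub_le_of_half_le_abs α β K hΨ_growth hε
  refine ⟨max C₁ C₂, ?_⟩
  filter_upwards [eventually_ge_atTop 0, hC₁, hC₂] with u hu hnear hfar v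
  have hρ := rpowExpSqrt_nonneg (α - 1 / 2) β hu
  rcases le_total |v| (u / 2) with hv | hv
  · exact (hnear v hv).trans (by gcongr; exact le_max_left _ _)
  · exact (hfar v hv).trans (by gcongr; exact le_max_right _ _)

lemma integral_mul_comp_sub_isBigO {X : Type*} [MeasurableSpace X] {μ : Measure X} {f ℓ : X → ℝ}
    (hf : Integrable f μ) (hfℓ : Integrable (fun x => f x * exp (ε * |ℓ x|)) μ) (hε : 0 < ε)
    (hℓ : Measurable ℓ) (hΨ : Measurable Ψ)
    (hΨ_asymp : (fun u => Ψ u - K * rpowExpSqrt α β u) =O[atTop] rpowExpSqrt (α - 1 / 2) β)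
    (hΨ_growth : ∀ δ, 0 < δ → ∃ M, ∀ w, |Ψ w| ≤ M * exp (δ * |w|)) :
    (fun u => ∫ x, f x * Ψ (u - ℓ x) ∂μ - K * rpowExpSqrt α β u * ∫ x, f x ∂μ)
      =O[atTop] rpowExpSqrt (α - 1 / 2) β := by
  obtain ⟨C, hC⟩ := eventually_abs_sub_le_mul_exp hΨ_asymp hΨ_growth hε
  refine .of_bound (C * ∫ x, ‖f x * exp (ε * |ℓ x|)‖ ∂μ) ?_
  filter_upwards [eventually_ge_atTop 0, hC] with u hu hCu
  set ρ := rpowExpSqrt α β u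
  set ρ' := rpowExpSqrt (α - 1 / 2) β u
  have hbound (x : X) :
      ‖f x * Ψ (u - ℓ x) - K * ρ * f x‖ ≤ C * ρ' * ‖f x * exp (ε * |ℓ x|)‖ := by
    rw [mul_comm (K * ρ), ← mul_sub, norm_mul, norm_mul, norm_of_nonneg (exp_pos _).le,
      mul_left_comm]
    exact mul_le_mul_of_nonneg_left (hCu (ℓ x)) (norm_nonneg _)
  have hmain := hf.const_mul (K * ρ)
  have hmeas : AEStronglyMeasurable (fun x => f x * Ψ (u - ℓ x)) μ :=
    hf.1.mul (hΨ.comp (hℓ.const_sub u)).aestronglyMeasurable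
  have herror := hfℓ.norm.const_mul (C * ρ')
  have hdiff := herror.mono' (hmeas.sub hmain.1) (.of_forall hbound)
  have hint : Integrable (fun x => f x * Ψ (u - ℓ x)) μ :=
    (hdiff.add hmain).congr (.of_forall fun x => sub_add_cancel _ _)
  rw [norm_of_nonneg (rpowExpSqrt_nonneg _ _ hu), ← integral_const_mul, ← integral_sub hint hmain]
  refine (norm_integral_le_of_norm_le herror (.of_forall hbound)).trans_eq ?_
  rw [integral_const_mul]
  ring

end

/-! ### The jump kernel in logarithmic coordinates -/

lemma bCoef_eq_aCoef (lam t η₁ η₂ p q : ℝ) (k : ℕ) :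
    bCoef lam t η₁ η₂ p q k = aCoef lam t η₂ η₁ q p k := by
  unfold bCoef aCoef Qcoef Pcoef
  congr 2 with m
  congr 2
  refine Finset.sum_congr rfl fun i _ => ?_
  rw [add_comm η₂ η₁]
  ring

lemma G2m_eq_G1 (lam t η₁ η₂ p q : ℝ) : G2m lam t η₁ η₂ p q = G1 lam t η₂ η₁ q p := by
  funext u
  simp only [G2m, G1, bCoef_eq_aCoef]

/-- `Ψ(w) = e^{(η₁+1)w} H(t, e^w)`, the kernel which `H` becomes in logarithmic coordinates once its
decay at infinity is factored out. -/
noncomputable def jumpKernel (lam t η₁ η₂ p q w : ℝ) : ℝ :=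
  if 0 < w then G1 lam t η₁ η₂ p q w
  else Real.exp ((η₁ + η₂) * w) * G2m lam t η₁ η₂ p q (-w)

section
variable {lam t η₁ η₂ p q : ℝ}

lemma Hfun_eq_rpow_mul_jumpKernel {z : ℝ} (hz : 0 < z) :
    Hfun lam t η₁ η₂ p q z = z ^ (-η₁ - 1) * jumpKernel lam t η₁ η₂ p q (Real.log z) := by
  unfold Hfun jumpKernel H1fun H2fun
  simp only [Real.log_pos_iff hz.le]
  split_ifs
  · ring
  · rw [Real.log_inv, mul_comm (η₁ + η₂), ← Real.rpow_def_of_pos hz, ← mul_assoc,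
      ← Real.rpow_add hz, show -η₁ - 1 + (η₁ + η₂) = η₂ - 1 by ring, mul_comm]

lemma measurable_jumpKernel (hL : 0 ≤ lam * t) (hη₁ : 0 ≤ η₁) (hη₂ : 0 ≤ η₂) (hp : 0 ≤ p)
    (hq : 0 ≤ q) : Measurable (jumpKernel lam t η₁ η₂ p q) := by
  refine Measurable.ite measurableSet_Ioi (measurable_G1 hL hη₁ hη₂ hp hq) ?_
  rw [G2m_eq_G1]
  exact .mul (by fun_prop) ((measurable_G1 hL hη₂ hη₁ hq hp).comp measurable_neg)

lemma exists_abs_jumpKernel_le_mul_exp (hL : 0 ≤ lam * t) (hη₁ : 0 ≤ η₁) (hη₂ : 0 ≤ η₂)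
    (hp : 0 ≤ p) (hq : 0 ≤ q) {δ : ℝ} (hδ : 0 < δ) :
    ∃ M, ∀ w, |jumpKernel lam t η₁ η₂ p q w| ≤ M * Real.exp (δ * |w|) := by
  obtain ⟨M₁, hM₁⟩ := exists_abs_G1_le_mul_exp hL hη₁ hη₂ hp hq hδ
  obtain ⟨M₂, hM₂⟩ := exists_abs_G1_le_mul_exp hL hη₂ hη₁ hq hp hδ
  refine ⟨max M₁ M₂, fun w => ?_⟩
  unfold jumpKernel
  split_ifs with hw
  · rw [abs_of_pos hw]
    exact (hM₁ w hw.le).trans (by gcongr; exact le_max_left _ _)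
  · have hw' : w ≤ 0 := not_lt.mp hw
    have hdecay : Real.exp ((η₁ + η₂) * w) ≤ 1 :=
      Real.exp_le_one_iff.mpr (mul_nonpos_of_nonneg_of_nonpos (by positivity) hw')
    rw [abs_mul, Real.abs_exp, G2m_eq_G1, abs_of_nonpos hw']
    calc Real.exp ((η₁ + η₂) * w) * |G1 lam t η₂ η₁ q p (-w)|
        ≤ |G1 lam t η₂ η₁ q p (-w)| := mul_le_of_le_one_left (abs_nonneg _) hdecay
      _ ≤ M₂ * Real.exp (δ * -w) := hM₂ _ (by linarith)
      _ ≤ max M₁ M₂ * Real.exp (δ * -w) := by gcongr; exact le_max_right _ _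

lemma jumpKernel_sub_isBigO (hL : 0 < lam * t) (hη₁ : 0 < η₁) (hη₂ : 0 ≤ η₂) (hp : 0 < p)
    (hq : 0 ≤ q) :
    (fun u => jumpKernel lam t η₁ η₂ p q u -
        1 / (2 * √Real.pi) * (η₁ * lam * t * p) ^ (1 / 4 : ℝ) *
          Real.exp (η₂ * lam * t * q / (η₁ + η₂) - lam * t) *
          rpowExpSqrt (-3 / 4) (2 * √(η₁ * lam * t * p)) u)
      =O[atTop] rpowExpSqrt (-5 / 4) (2 * √(η₁ * lam * t * p)) := by
  refine (G1_sub_isBigO hL hη₁ hη₂ hp hq).congr' ?_ .rfl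
  filter_upwards [eventually_gt_atTop 0] with u hu
  rw [jumpKernel, if_pos hu]

end

lemma mellinConv_comm (f g : ℝ → ℝ) {x : ℝ} (hx : 0 < x) :
    mellinConv f g x = mellinConv g f x := by
  have hmellin (f g : ℝ → ℝ) :
      (mellinConv f g x : ℂ) = mellin (fun t => ((f (x / t) * g t : ℝ) : ℂ)) 0 := by
    rw [mellinConv, ← integral_complex_ofReal, mellin]
    refine setIntegral_congr_fun measurableSet_Ioi fun t _ => ?_
    simp only [zero_sub, Complex.cpow_neg_one, smul_eq_mul]
    push_cast
    ring
  have hinv (t : ℝ) : f (x / t) * g t = g (x / (x * t⁻¹)) * f (x * t⁻¹) := by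
    rw [← div_eq_mul_inv, div_div_cancel₀ hx.ne', mul_comm]
  apply Complex.ofReal_injective
  rw [hmellin, hmellin]
  simp only [hinv]
  rw [mellin_comp_inv (fun t => ((g (x / (x * t)) * f (x * t) : ℝ) : ℂ)), neg_zero,
    mellin_comp_mul_left (fun t => ((g (x / t) * f t : ℝ) : ℂ)) 0 hx, neg_zero, Complex.cpow_zero,
    one_smul]

lemma mellinConv_Hfun_eq (lam t η₁ η₂ p q : ℝ) (U : ℝ → ℝ) {x : ℝ} (hx : 0 < x) :
    mellinConv U (Hfun lam t η₁ η₂ p q) x = x ^ (-η₁ - 1) *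
      ∫ y in Set.Ioi 0, y ^ η₁ * U y * jumpKernel lam t η₁ η₂ p q (Real.log x - Real.log y) := by
  rw [mellinConv_comm _ _ hx, mellinConv, ← integral_const_mul]
  refine setIntegral_congr_fun measurableSet_Ioi fun y (hy : 0 < y) => ?_
  rw [Hfun_eq_rpow_mul_jumpKernel (div_pos hx hy), Real.log_div hx.ne' hy.ne',
    Real.div_rpow hx.le hy.le, show -η₁ - 1 = -(η₁ + 1) by ring, Real.rpow_neg hy.le,
    Real.rpow_add_one hy.ne']
  field_simp

/-! ### Moments and tails -/

section
open Real

variable {f : ℝ → ℝ} {a s : ℝ}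

lemma integrableOn_rpow_mul_of_isBigO (hf : IntegrableOn f (Set.Ioi 0))
    (hfO : f =O[atTop] fun x => x ^ a) (hs : 0 ≤ s) (hsa : s + a < -1) :
    IntegrableOn (fun x => x ^ s * f x) (Set.Ioi 0) := by
  obtain ⟨c, hc, htail⟩ := mellin_convergent_top_of_isBigO (a := -a) (s := s + 1) hf.1
    (by simpa only [neg_neg] using hfO) (by linarith)
  rw [add_sub_cancel_right] at htail
  rw [← Set.Ioc_union_Ioi_eq_Ioi hc.le]
  refine .union (.bdd_mul (c := c ^ s) (hf.mono_set Set.Ioc_subset_Ioi_self) (by fun_prop) ?_) htail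
  filter_upwards [ae_restrict_mem measurableSet_Ioc] with x hx
  rw [norm_of_nonneg (rpow_nonneg hx.1.le s)]
  exact rpow_le_rpow hx.1.le hx.2 hs

lemma exp_mul_abs_log_le (ε : ℝ) {x : ℝ} (hx : 0 < x) :
    exp (ε * |log x|) ≤ x ^ ε + x ^ (-ε) := by
  rw [rpow_def_of_pos hx, rpow_def_of_pos hx, mul_comm (log x), mul_comm (log x), neg_mul,
    ← mul_neg]
  rcases abs_choice (log x) with h | h <;> rw [h]
  · exact le_add_of_nonneg_right (exp_pos _).le
  · exact le_add_of_nonneg_left (exp_pos _).le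

lemma integrableOn_rpow_mul_mul_exp_abs_log_of_isBigO {ε : ℝ} (hf : IntegrableOn f (Set.Ioi 0))
    (hfO : f =O[atTop] fun x => x ^ a) (hε : 0 ≤ ε) (hεs : ε ≤ s) (hsa : s + ε + a < -1) :
    IntegrableOn (fun x => x ^ s * f x * exp (ε * |log x|)) (Set.Ioi 0) := by
  have hplus := integrableOn_rpow_mul_of_isBigO hf hfO (by linarith : 0 ≤ s + ε) hsa
  have hminus := integrableOn_rpow_mul_of_isBigO hf hfO (by linarith : 0 ≤ s - ε) (by linarith)
  refine (hplus.norm.add hminus.norm).mono' (.mul (.mul ?_ hf.1) ?_) ?_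
  · exact (by fun_prop : Measurable fun x : ℝ => x ^ s).aestronglyMeasurable
  · exact (by fun_prop : Measurable fun x : ℝ => exp (ε * |log x|)).aestronglyMeasurable
  filter_upwards [ae_restrict_mem measurableSet_Ioi] with x hx
  have hx0 : 0 < x := hx
  calc ‖x ^ s * f x * exp (ε * |log x|)‖ = x ^ s * ‖f x‖ * exp (ε * |log x|) := by
        rw [norm_mul, norm_mul, norm_of_nonneg (rpow_nonneg hx0.le s),
          norm_of_nonneg (exp_pos _).le]
    _ ≤ x ^ s * ‖f x‖ * (x ^ ε + x ^ (-ε)) := by gcongr; exact exp_mul_abs_log_le ε hx0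
    _ = ‖x ^ (s + ε) * f x‖ + ‖x ^ (s - ε) * f x‖ := by
        rw [norm_mul, norm_mul, norm_of_nonneg (rpow_nonneg hx0.le _),
          norm_of_nonneg (rpow_nonneg hx0.le _), rpow_add hx0, sub_eq_add_neg, rpow_add hx0]
        ring

lemma setIntegral_rpow_mul_ne_zero (hf_nonneg : ∀ x, 0 ≤ f x) (hf : ∫ x in Set.Ioi 0, f x ≠ 0)
    (hfs : IntegrableOn (fun x => x ^ s * f x) (Set.Ioi 0)) :
    ∫ x in Set.Ioi 0, x ^ s * f x ≠ 0 := by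
  have hnonneg : 0 ≤ᵐ[volume.restrict (Set.Ioi 0)] fun x => x ^ s * f x := by
    filter_upwards [ae_restrict_mem measurableSet_Ioi] with x hx
    exact mul_nonneg (rpow_nonneg (le_of_lt hx) s) (hf_nonneg x)
  refine fun hzero => hf (integral_eq_zero_of_ae ?_)
  rw [integral_eq_zero_iff_of_nonneg_ae hnonneg hfs] at hzero
  filter_upwards [hzero, ae_restrict_mem measurableSet_Ioi] with x hx hx0
  exact (mul_eq_zero.mp hx).resolve_left (rpow_pos_of_pos hx0 s).ne'

lemma eventually_rpow_neg_le_rpowExpSqrt_log_and_le_rpow (α β : ℝ) {δ : ℝ} (hδ : 0 < δ) :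
    ∀ᶠ x in atTop,
      x ^ (-δ) ≤ rpowExpSqrt α β (log x) ∧ rpowExpSqrt α β (log x) ≤ x ^ δ := by
  filter_upwards [eventually_gt_atTop 0, tendsto_log_atTop.eventually
    (eventually_exp_neg_le_rpowExpSqrt_and_le_exp α β hδ)] with x hx hρ
  rwa [rpow_def_of_pos hx, rpow_def_of_pos hx, mul_comm, mul_comm (log x), neg_mul]

lemma rpow_isBigO_rpow_mul_rpowExpSqrt_log {b : ℝ} (α β : ℝ) (hab : a < b) :
    (fun x => x ^ a) =O[atTop] fun x => x ^ b * rpowExpSqrt α β (log x) := by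
  refine .of_bound 1 ?_
  filter_upwards [eventually_gt_atTop 0,
    eventually_rpow_neg_le_rpowExpSqrt_log_and_le_rpow α β (sub_pos.mpr hab)] with x hx ⟨hle, _⟩
  rw [one_mul, norm_mul, norm_of_nonneg (rpow_nonneg hx.le _), norm_of_nonneg (rpow_nonneg hx.le _),
    show a = b + -(b - a) by ring, rpow_add hx]
  gcongr
  exact hle.trans (le_abs_self _)

lemma rpow_mul_rpowExpSqrt_log_isBigO_rpow {b : ℝ} (α β : ℝ) (hab : a < b) :
    (fun x => x ^ a * rpowExpSqrt α β (log x)) =O[atTop] fun x => x ^ b := by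
  refine .of_bound 1 ?_
  filter_upwards [eventually_ge_atTop 1,
    eventually_rpow_neg_le_rpowExpSqrt_log_and_le_rpow α β (sub_pos.mpr hab)] with x hx ⟨_, hle⟩
  have hx0 : 0 < x := by linarith
  rw [one_mul, norm_mul, norm_of_nonneg (rpow_nonneg hx0.le _),
    norm_of_nonneg (rpow_nonneg hx0.le _), norm_of_nonneg (rpowExpSqrt_nonneg α β (log_nonneg hx)),
    show b = a + (b - a) by ring, rpow_add hx0]
  gcongr

lemma isBigO_rpow_of_sub_isBigO_mul_rpow_log {B A b κ r : ℝ} (hr : r < 0) (hab : a < b)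
    (hf : (fun x => f x - B * x ^ a * exp (A * √(log x)) * log x ^ κ) =O[atTop]
      fun x => B * x ^ a * exp (A * √(log x)) * log x ^ κ * log x ^ r) :
    f =O[atTop] fun x => x ^ b := by
  have hzero : (fun x => log x ^ r) =o[atTop] fun _ => (1 : ℝ) := by
    rw [isLittleO_one_iff, ← neg_neg r]
    exact (tendsto_rpow_neg_atTop (neg_pos.mpr hr)).comp tendsto_log_atTop
  have hequiv : f ~[atTop] fun x => B * x ^ a * exp (A * √(log x)) * log x ^ κ := by
    refine hf.trans_isLittleO ?_
    simpa only [mul_one] using (isBigO_refl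
      (fun x => B * x ^ a * exp (A * √(log x)) * log x ^ κ) atTop).mul_isLittleO hzero
  refine hequiv.isBigO.trans ?_
  refine ((rpow_mul_rpowExpSqrt_log_isBigO_rpow κ A hab).const_mul_left B).congr_left fun x => ?_
  rw [rpowExpSqrt]
  ring

end

/-! ### The density at infinity -/

section
variable {t lam η₁ η₂ p q a : ℝ} {U : ℝ → ℝ}

lemma mellinConv_Hfun_sub_isBigO (hL : 0 < lam * t) (hη₁ : 0 < η₁) (hη₂ : 0 ≤ η₂) (hp : 0 < p)
    (hq : 0 ≤ q) (ha : a < -1 - η₁) (hU : IntegrableOn U (Set.Ioi 0))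
    (hUO : U =O[atTop] fun x => x ^ a) :
    (fun x => mellinConv U (Hfun lam t η₁ η₂ p q) x - x ^ (-η₁ - 1) *
        (1 / (2 * √Real.pi) * (η₁ * lam * t * p) ^ (1 / 4 : ℝ) *
          Real.exp (η₂ * lam * t * q / (η₁ + η₂) - lam * t) *
          rpowExpSqrt (-3 / 4) (2 * √(η₁ * lam * t * p)) (Real.log x) *
          ∫ y in Set.Ioi 0, y ^ η₁ * U y))
      =O[atTop] fun x =>
        x ^ (-η₁ - 1) * rpowExpSqrt (-5 / 4) (2 * √(η₁ * lam * t * p)) (Real.log x) := by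
  obtain ⟨ε, hε, hε_lt⟩ : ∃ ε, 0 < ε ∧ ε < min η₁ (-1 - η₁ - a) :=
    exists_between (lt_min hη₁ (sub_pos.mpr ha))
  obtain ⟨hεη, hεa⟩ := lt_min_iff.mp hε_lt
  have hconv := integral_mul_comp_sub_isBigO
    (integrableOn_rpow_mul_of_isBigO hU hUO hη₁.le (by linarith))
    (integrableOn_rpow_mul_mul_exp_abs_log_of_isBigO hU hUO hε.le hεη.le (by linarith))
    hε Real.measurable_log (measurable_jumpKernel hL.le hη₁.le hη₂ hp.le hq)
    (α := -3 / 4)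
    (by simpa only [show (-3 / 4 - 1 / 2 : ℝ) = -5 / 4 by norm_num] using
      jumpKernel_sub_isBigO hL hη₁ hη₂ hp hq)
    fun δ hδ => exists_abs_jumpKernel_le_mul_exp hL.le hη₁.le hη₂ hp.le hq hδ
  rw [show (-3 / 4 - 1 / 2 : ℝ) = -5 / 4 by norm_num] at hconv
  refine ((isBigO_refl (fun x : ℝ => x ^ (-η₁ - 1)) atTop).mul
    (hconv.comp_tendsto Real.tendsto_log_atTop)).congr' ?_ .rfl
  filter_upwards [eventually_gt_atTop 0] with x hx
  rw [mellinConv_Hfun_eq lam t η₁ η₂ p q U hx, ← mul_sub]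
  rfl

end

theorem density_asymptotics_jump_dominates_at_infinity_general
    {t lam η₁ η₂ p q a : ℝ} {U : ℝ → ℝ} (hL : 0 < lam * t) (hη₁ : 0 < η₁) (hη₂ : 0 ≤ η₂)
    (hp : 0 < p) (hq : 0 ≤ q) (ha : a < -1 - η₁) (hU : IntegrableOn U (Set.Ioi 0))
    (hUO : U =O[atTop] fun x => x ^ a) (hm : ∫ y in Set.Ioi 0, y ^ η₁ * U y ≠ 0) :
    IntegrableOn (fun x => x ^ η₁ * U x) (Set.Ioi 0) ∧
    (fun x => (Real.exp (-(lam * t)) * U x + mellinConv U (Hfun lam t η₁ η₂ p q) x) -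
        1 / (2 * √Real.pi) * (∫ y in Set.Ioi (0 : ℝ), y ^ η₁ * U y) *
          (η₁ * lam * t * p) ^ ((1 : ℝ) / 4) *
          Real.exp (η₂ * lam * t * q / (η₁ + η₂) - lam * t) * Real.log x ^ (-(3 : ℝ) / 4) *
          Real.exp (2 * √(η₁ * lam * t * p) * √(Real.log x)) * x ^ (-η₁ - 1))
      =O[atTop] fun x =>
        1 / (2 * √Real.pi) * (∫ y in Set.Ioi (0 : ℝ), y ^ η₁ * U y) *
          (η₁ * lam * t * p) ^ ((1 : ℝ) / 4) *
          Real.exp (η₂ * lam * t * q / (η₁ + η₂) - lam * t) * Real.log x ^ (-(3 : ℝ) / 4) *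
          Real.exp (2 * √(η₁ * lam * t * p) * √(Real.log x)) * x ^ (-η₁ - 1) *
          Real.log x ^ (-(1 : ℝ) / 2) := by
  refine ⟨integrableOn_rpow_mul_of_isBigO hU hUO hη₁.le (by linarith), ?_⟩
  set m := ∫ y in Set.Ioi (0 : ℝ), y ^ η₁ * U y
  set β := 2 * √(η₁ * lam * t * p)
  set K := 1 / (2 * √Real.pi) * (η₁ * lam * t * p) ^ ((1 : ℝ) / 4) *
    Real.exp (η₂ * lam * t * q / (η₁ + η₂) - lam * t)
  have hc : 0 < η₁ * lam * t * p := by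
    rw [mul_assoc η₁]
    positivity
  have hK : K * m ≠ 0 := mul_ne_zero (by positivity) hm
  have hU_tail : (fun x => Real.exp (-(lam * t)) * U x) =O[atTop]
      fun x => x ^ (-η₁ - 1) * rpowExpSqrt (-5 / 4) β (Real.log x) :=
    (hUO.trans (rpow_isBigO_rpow_mul_rpowExpSqrt_log _ _ (by linarith))).const_mul_left _
  have hsum := (hU_tail.add (mellinConv_Hfun_sub_isBigO hL hη₁ hη₂ hp hq ha hU hUO)).trans
    (isBigO_self_const_mul hK _ _)
  refine hsum.congr' (.of_forall fun x => ?_) ?_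
  · simp only [rpowExpSqrt, neg_div]
    ring
  · filter_upwards [eventually_gt_atTop 1] with x hx
    have hlog : Real.log x ^ (-5 / 4 : ℝ) =
        Real.log x ^ (-(3 : ℝ) / 4) * Real.log x ^ (-(1 : ℝ) / 2) := by
      rw [← Real.rpow_add (Real.log_pos hx)]
      norm_num
    simp only [rpowExpSqrt, hlog]
    ring

/-- Theorem: density asymptotics at infinity when the jump part
dominates, `A₃ > 1 + η₁`.  Let `U` be a probability density on `(0,∞)` with the
Heston-type asymptotics at infinity and zero, and let
`D(x) = e^{−λt} U(x) + (U ⋆_M H(t,·))(x)`.  Then the moment `m_{η₁}(U)` is finite and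
`D(x) = (1/(2√π)) m_{η₁}(U) (η₁λtp)^{1/4} exp{η₂λtq/(η₁+η₂) − λt} (log x)^{−3/4}`
`· exp{2√(η₁λtp) √(log x)} x^{−η₁−1} (1 + O((log x)^{−1/2}))` as `x → ∞`. -/
theorem density_asymptotics_jump_dominates_at_infinity
    (t lam η₁ η₂ p q : ℝ) (U : ℝ → ℝ) (B₁ Bt₁ A₂ At₂ A₃ At₃ κ : ℝ)
    (ht : 0 < t) (hlam : 0 < lam) (hη₁ : 1 < η₁) (hη₂ : 0 < η₂)
    (hp : 0 < p) (hq : 0 < q) (hpq : p + q = 1)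
    (hB₁ : 0 < B₁) (hBt₁ : 0 < Bt₁) (hAt₃ : -1 < At₃) (hA₃ : 1 + η₁ < A₃)
    (hU_meas : Measurable U) (hU_nonneg : ∀ x, 0 ≤ U x)
    (hU_prob : (∫ x in Set.Ioi (0:ℝ), U x) = 1)
    -- `U(x) = B₁ x^{−A₃} exp{A₂√(log x)} (log x)^κ (1 + O((log x)^{−1/2}))` as `x → ∞`
    (hU_infty : (fun x => U x -
        B₁ * x ^ (-A₃) * Real.exp (A₂ * Real.sqrt (Real.log x)) * (Real.log x) ^ κ)
      =O[atTop] (fun x =>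
        B₁ * x ^ (-A₃) * Real.exp (A₂ * Real.sqrt (Real.log x)) * (Real.log x) ^ κ *
          (Real.log x) ^ (-(1:ℝ)/2)))
    -- `U(x) = B̃₁ x^{Ã₃} exp{Ã₂√(log(1/x))} (log(1/x))^κ (1 + O((log(1/x))^{−1/2}))` as `x → 0`
    (hU_zero : (fun x => U x -
        Bt₁ * x ^ At₃ * Real.exp (At₂ * Real.sqrt (Real.log x⁻¹)) * (Real.log x⁻¹) ^ κ)
      =O[nhdsWithin 0 (Set.Ioi 0)] (fun x =>
        Bt₁ * x ^ At₃ * Real.exp (At₂ * Real.sqrt (Real.log x⁻¹)) * (Real.log x⁻¹) ^ κ *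
          (Real.log x⁻¹) ^ (-(1:ℝ)/2))) :
    MeasureTheory.IntegrableOn (fun x => x ^ η₁ * U x) (Set.Ioi 0) ∧
    (fun x => (Real.exp (-(lam * t)) * U x +
        mellinConv U (Hfun lam t η₁ η₂ p q) x) -
        1 / (2 * Real.sqrt Real.pi) * (∫ y in Set.Ioi (0:ℝ), y ^ η₁ * U y) *
          (η₁ * lam * t * p) ^ ((1:ℝ)/4) *
          Real.exp (η₂ * lam * t * q / (η₁ + η₂) - lam * t) *
          (Real.log x) ^ (-(3:ℝ)/4) *
          Real.exp (2 * Real.sqrt (η₁ * lam * t * p) * Real.sqrt (Real.log x)) *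
          x ^ (-η₁ - 1))
      =O[atTop]
      (fun x =>
        1 / (2 * Real.sqrt Real.pi) * (∫ y in Set.Ioi (0:ℝ), y ^ η₁ * U y) *
          (η₁ * lam * t * p) ^ ((1:ℝ)/4) *
          Real.exp (η₂ * lam * t * q / (η₁ + η₂) - lam * t) *
          (Real.log x) ^ (-(3:ℝ)/4) *
          Real.exp (2 * Real.sqrt (η₁ * lam * t * p) * Real.sqrt (Real.log x)) *
          x ^ (-η₁ - 1) * (Real.log x) ^ (-(1:ℝ)/2)) := by
  obtain ⟨a, ha_tail, ha⟩ : ∃ a, -A₃ < a ∧ a < -1 - η₁ := exists_between (by linarith)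
  have hUO : U =O[atTop] fun x => x ^ a :=
    isBigO_rpow_of_sub_isBigO_mul_rpow_log (by norm_num) ha_tail hU_infty
  have hU_ne : ∫ x in Set.Ioi 0, U x ≠ 0 := hU_prob ▸ one_ne_zero
  have hU : IntegrableOn U (Set.Ioi 0) := .of_integral_ne_zero hU_ne
  have hm : ∫ y in Set.Ioi 0, y ^ η₁ * U y ≠ 0 := setIntegral_rpow_mul_ne_zero hU_nonneg hU_ne
    (integrableOn_rpow_mul_of_isBigO hU hUO (by linarith) (by linarith))
  exact density_asymptotics_jump_dominates_at_infinity_general (mul_pos hlam ht) (by linarith)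
    hη₂.le hp hq.le ha hU hUO hm
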